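/- Let p ≥ 1 be a real number. Let k̃ : ℝ × [0,∞) → ℝ be a smooth function, 2π-periodic in its first (angular) variable θ, with k̃(θ,τ) > 0 everywhere, satisfying the rescaled curve-shortening equation ∂k̃/∂τ = p·k̃^{1+1/p}·∂²k̃/∂θ² + p·k̃^{2+1/p} − p·k̃ on ℝ × (0,∞), and suppose sup_θ |k̃(θ,τ) − 1| → 0 as τ → ∞. Then for any constant α with 0 < α < 1 there exists a constant C₅ > 0, depending only on p, α and the initial data k̃(·,0), such that for all τ ≥ 0: sup_θ |∂k̃/∂θ (θ,τ)| ≤ C₅·exp(−2αp·τ). -/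

import Mathlib

open Real Filter Set

lemma normSq_fourierCoeffOn_of_cos_sin {f : ℝ → ℝ} (hf : Continuous f) (n : ℤ) :
    ‖fourierCoeffOn two_pi_pos (fun x => (f x : ℂ)) n‖ ^ 2
      = ((∫ x in (0 : ℝ)..2 * π, f x * cos (n * x)) ^ 2
          + (∫ x in (0 : ℝ)..2 * π, f x * sin (n * x)) ^ 2) / (4 * π ^ 2) := by
  have hπ := pi_pos
  have h : ∫ x in (0 : ℝ)..2 * π,
      fourier (-n) (x : AddCircle (2 * π - 0)) • (f x : ℂ)
      = ((∫ x in (0 : ℝ)..2 * π, f x * cos (n * x) : ℝ) : ℂ)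
        - ((∫ x in (0 : ℝ)..2 * π, f x * sin (n * x) : ℝ) : ℂ) * Complex.I := by
    rw [← intervalIntegral.integral_ofReal, ← intervalIntegral.integral_ofReal,
      ← intervalIntegral.integral_mul_const, ← intervalIntegral.integral_sub]
    · refine intervalIntegral.integral_congr fun x _ => ?_
      have : (2 * (π : ℂ) * Complex.I * ((-n : ℤ) : ℂ) * (x : ℂ) / ((2 * π - 0 : ℝ) : ℂ))
          = ((-(n * x) : ℝ) : ℂ) * Complex.I := by
        have : (π : ℂ) ≠ 0 := by exact_mod_cast hπ.ne'
        push_cast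
        field_simp
        ring
      simp only [fourier_coe_apply, smul_eq_mul]
      rw [this, Complex.exp_mul_I, ← Complex.ofReal_cos, ← Complex.ofReal_sin, cos_neg, sin_neg]
      push_cast
      ring
    · exact Continuous.intervalIntegrable (by fun_prop) _ _
    · exact Continuous.intervalIntegrable (by fun_prop) _ _
  rw [fourierCoeffOn_eq_integral, h, norm_smul, mul_pow, Complex.sq_norm, Complex.normSq_apply]
  simp [abs_of_pos hπ]
  field_simp
  ring

/-- Wirtinger's inequality with the sharp constant for the second eigenvalue: the first Fourier
mode enters as an error term. -/
lemma wirtinger_second_mode {f f' : ℝ → ℝ} (hf : ∀ x, HasDerivAt f (f' x) x)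
    (hf' : Continuous f') (hper : f (2 * π) = f 0) (hmean : ∫ x in (0 : ℝ)..2 * π, f x = 0) :
    4 * ∫ x in (0 : ℝ)..2 * π, f x ^ 2 ≤ (∫ x in (0 : ℝ)..2 * π, f' x ^ 2)
      + 3 / π * ((∫ x in (0 : ℝ)..2 * π, f x * cos x) ^ 2
          + (∫ x in (0 : ℝ)..2 * π, f x * sin x) ^ 2) := by
  have hπ := pi_pos
  have hfc : Continuous f := continuous_iff_continuousAt.2 fun x => (hf x).continuousAt
  have parseval : ∀ {g : ℝ → ℝ}, Continuous g →
      HasSum (fun i => ‖fourierCoeffOn two_pi_pos (fun x => (g x : ℂ)) i‖ ^ 2)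
        ((2 * π)⁻¹ * ∫ x in (0 : ℝ)..2 * π, g x ^ 2) := by
    intro g hg
    have hgc : Continuous fun x => (g x : ℂ) := by fun_prop
    have h2 : MeasureTheory.MemLp (fun x => (g x : ℂ)) 2
        (MeasureTheory.volume.restrict (Ioc 0 (2 * π))) :=
      (MeasureTheory.memLp_two_iff_integrable_sq_norm hgc.aestronglyMeasurable).2
        (Continuous.integrableOn_Ioc (by fun_prop))
    simpa using hasSum_sq_fourierCoeffOn two_pi_pos h2
  set c := fun i => ‖fourierCoeffOn two_pi_pos (fun x => (f x : ℂ)) i‖ ^ 2 with hc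
  have h0 : c 0 = 0 := by
    simp only [hc]
    rw [normSq_fourierCoeffOn_of_cos_sin hfc]
    simp [hmean]
  have hd : ∀ n : ℤ, n ≠ 0 → ‖fourierCoeffOn two_pi_pos (fun x => (f' x : ℂ)) n‖ ^ 2
      = (n : ℝ) ^ 2 * c n := by
    intro n hn
    have hcast : (n : ℂ) ≠ 0 := by exact_mod_cast hn
    have hπc : (π : ℂ) ≠ 0 := by exact_mod_cast hπ.ne'
    have := fourierCoeffOn_of_hasDerivAt two_pi_pos hn
      (f := fun x => (f x : ℂ)) (f' := fun x => (f' x : ℂ)) (fun x _ => (hf x).ofReal_comp)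
      (Continuous.intervalIntegrable (by fun_prop) _ _)
    have h' : fourierCoeffOn two_pi_pos (fun x => (f' x : ℂ)) n
        = Complex.I * n * fourierCoeffOn two_pi_pos (fun x => (f x : ℂ)) n := by
      rw [this, hper]
      push_cast
      field_simp
      ring
    rw [h', norm_mul, norm_mul, mul_pow, mul_pow]
    simp [hc]
  have hsum := hasSum_le (f := fun n => 4 * c n)
    (g := fun n => ‖fourierCoeffOn two_pi_pos (fun x => (f' x : ℂ)) n‖ ^ 2
      + ((if n = 1 then 3 * c 1 else 0) + (if n = -1 then 3 * c (-1) else 0))) ?_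
    ((parseval hfc).mul_left 4)
    ((parseval hf').add ((hasSum_ite_eq 1 (3 * c 1)).add (hasSum_ite_eq (-1) (3 * c (-1)))))
  · have h1 := normSq_fourierCoeffOn_of_cos_sin hfc 1
    have h2 := normSq_fourierCoeffOn_of_cos_sin hfc (-1)
    simp only [Int.cast_neg, Int.cast_one, neg_mul, one_mul, cos_neg, sin_neg, mul_neg,
      intervalIntegral.integral_neg, neg_sq] at h1 h2
    simp only [hc, h1, h2] at hsum
    have := mul_le_mul_of_nonneg_left hsum two_pi_pos.le
    calc _ = _ := ?_
      _ ≤ _ := this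
      _ = _ := ?_
    · field_simp
    · field_simp; ring
  · intro n
    have hcn : 0 ≤ c n := by positivity
    rcases eq_or_ne n 0 with rfl | hn0
    · simp [h0]
    rcases eq_or_ne n 1 with rfl | hn1
    · simp [hd 1]; linarith
    rcases eq_or_ne n (-1) with rfl | hn2
    · simp [hd (-1)]; linarith
    simp only [hd n hn0, hn1, hn2, if_false, add_zero]
    have : (4 : ℝ) ≤ (n : ℝ) ^ 2 := by
      have : (4 : ℤ) ≤ n ^ 2 := by
        rcases lt_or_gt_of_ne hn0 with h | h
        · have : n ≤ -2 := by omega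
          nlinarith
        · have : 2 ≤ n := by omega
          nlinarith
      exact_mod_cast this
    exact mul_le_mul_of_nonneg_right this hcn

lemma sq_integral_abs_le {f : ℝ → ℝ} (hf : Continuous f) :
    (∫ x in (0 : ℝ)..2 * π, |f x|) ^ 2 ≤ 2 * π * ∫ x in (0 : ℝ)..2 * π, f x ^ 2 := by
  have hπ := two_pi_pos
  set m := ∫ x in (0 : ℝ)..2 * π, |f x| with hm
  have h0 : 0 ≤ ∫ x in (0 : ℝ)..2 * π, (|f x| - m / (2 * π)) ^ 2 :=
    intervalIntegral.integral_nonneg hπ.le fun x _ => sq_nonneg _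
  have h1 : ∫ x in (0 : ℝ)..2 * π, (|f x| - m / (2 * π)) ^ 2
      = (∫ x in (0 : ℝ)..2 * π, f x ^ 2) - m ^ 2 / (2 * π) := by
    have : ∀ x, (|f x| - m / (2 * π)) ^ 2
        = f x ^ 2 - m / π * |f x| + (m / (2 * π)) ^ 2 := by
      intro x
      rw [sub_sq, sq_abs]
      field_simp
    simp_rw [this]
    rw [intervalIntegral.integral_add, intervalIntegral.integral_sub,
      intervalIntegral.integral_const_mul, ← hm]
    · simp
      field_simp
      ring
    all_goals exact Continuous.intervalIntegrable (by fun_prop) _ _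
  rw [h1, sub_nonneg, div_le_iff₀ hπ] at h0
  linarith

/-- A function on a period that has a zero is bounded by the `L²` norm of its derivative. -/
lemma sq_le_integral_deriv_sq {g f f' : ℝ → ℝ} (hg : ∀ x, HasDerivAt g (f x) x)
    (hf : ∀ x, HasDerivAt f (f' x) x)
    (hf' : Continuous f') (hper : g (2 * π) = g 0) {x : ℝ} (hx : x ∈ Icc 0 (2 * π)) :
    f x ^ 2 ≤ 2 * π * ∫ x in (0 : ℝ)..2 * π, f' x ^ 2 := by
  obtain ⟨c, hc, hc0⟩ := exists_hasDerivAt_eq_zero two_pi_pos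
    (fun x _ => (hg x).continuousAt.continuousWithinAt) hper.symm (fun x _ => hg x)
  have h1 : ∫ y in c..x, f' y = f x := by
    rw [intervalIntegral.integral_eq_sub_of_hasDerivAt (fun y _ => hf y)
      (hf'.intervalIntegrable _ _), hc0, sub_zero]
  have h2 : |f x| ≤ ∫ y in (0 : ℝ)..2 * π, |f' y| := by
    rw [← h1]
    have hnn : 0 ≤ ∫ y in (0 : ℝ)..2 * π, |f' y| :=
      intervalIntegral.integral_nonneg two_pi_pos.le fun _ _ => abs_nonneg _
    have hsub : uIoc c x ⊆ uIoc 0 (2 * π) := by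
      rw [uIoc_of_le two_pi_pos.le]
      exact Ioc_subset_Ioc (le_min hc.1.le hx.1) (max_le hc.2.le hx.2)
    calc |∫ y in c..x, f' y| ≤ |∫ y in c..x, ‖f' y‖| :=
          (Real.norm_eq_abs _).symm.trans_le intervalIntegral.norm_integral_le_abs_integral_norm
      _ ≤ |∫ y in (0 : ℝ)..2 * π, ‖f' y‖| :=
          intervalIntegral.abs_integral_mono_interval hsub
            (Eventually.of_forall fun _ => norm_nonneg _)
            (Continuous.intervalIntegrable (by fun_prop) _ _)
      _ = _ := abs_of_nonneg hnn
  calc f x ^ 2 = |f x| ^ 2 := (sq_abs _).symm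
    _ ≤ (∫ y in (0 : ℝ)..2 * π, |f' y|) ^ 2 := by gcongr
    _ ≤ _ := sq_integral_abs_le hf'

/-- Interpolation between derivatives of a periodic function. -/
lemma interpolation_deriv_sq {f f' f'' : ℝ → ℝ} (hf : ∀ x, HasDerivAt f (f' x) x)
    (hf1 : ∀ x, HasDerivAt f' (f'' x) x) (hf2 : Continuous f'')
    (hper : f (2 * π) = f 0) (hper' : f' (2 * π) = f' 0) (M : ℝ) :
    2 * M * (∫ x in (0 : ℝ)..2 * π, f' x ^ 2)
      ≤ (∫ x in (0 : ℝ)..2 * π, f'' x ^ 2) + M ^ 2 * ∫ x in (0 : ℝ)..2 * π, f x ^ 2 := by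
  have hfc : Continuous f := continuous_iff_continuousAt.2 fun x => (hf x).continuousAt
  have hfc' : Continuous f' := continuous_iff_continuousAt.2 fun x => (hf1 x).continuousAt
  have ibp : ∫ x in (0 : ℝ)..2 * π, (f' x ^ 2 + f x * f'' x) = 0 := by
    rw [intervalIntegral.integral_eq_sub_of_hasDerivAt (f := fun x => f x * f' x)
      (fun x _ => ((hf x).mul (hf1 x)).congr_deriv (by ring))
      (Continuous.intervalIntegrable (by fun_prop) _ _), hper, hper', sub_self]
  have h0 : 0 ≤ ∫ x in (0 : ℝ)..2 * π, (f'' x + M * f x) ^ 2 :=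
    intervalIntegral.integral_nonneg two_pi_pos.le fun x _ => sq_nonneg _
  have h1 : ∫ x in (0 : ℝ)..2 * π, (f'' x + M * f x) ^ 2
      = ∫ x in (0 : ℝ)..2 * π, (f'' x ^ 2 + M ^ 2 * f x ^ 2 - 2 * M * f' x ^ 2
        + 2 * M * (f' x ^ 2 + f x * f'' x)) := by
    congr 1; ext x; ring
  rw [h1, intervalIntegral.integral_add, intervalIntegral.integral_sub,
    intervalIntegral.integral_add, intervalIntegral.integral_const_mul,
    intervalIntegral.integral_const_mul, intervalIntegral.integral_const_mul, ibp] at h0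
  · linarith
  all_goals exact Continuous.intervalIntegrable (by fun_prop) _ _

/-- Grönwall's inequality for a differential inequality with constant negative rate. -/
lemma le_mul_exp_of_deriv_le {f f' : ℝ → ℝ} {T c : ℝ}
    (hf : ∀ t, T ≤ t → HasDerivAt f (f' t) t) (hle : ∀ t, T ≤ t → f' t ≤ -c * f t) {t : ℝ}
    (ht : T ≤ t) : f t ≤ f T * exp (c * T) * exp (-c * t) := by
  have hd : ∀ s, T ≤ s → HasDerivAt (fun s => f s * exp (c * s))
      ((f' s + c * f s) * exp (c * s)) s := by
    intro s hs
    exact ((hf s hs).mul (((hasDerivAt_id s).const_mul c).exp)).congr_deriv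
      (by simp only [id]; ring)
  have hanti : AntitoneOn (fun s => f s * exp (c * s)) (Ici T) := by
    refine antitoneOn_of_hasDerivWithinAt_nonpos (convex_Ici T)
      (fun s hs => (hd s hs).continuousAt.continuousWithinAt)
      (fun s hs => (hd s (interior_subset hs)).hasDerivWithinAt) fun s hs => ?_
    have := hle s (interior_subset hs)
    exact mul_nonpos_of_nonpos_of_nonneg (by linarith) (exp_pos _).le
  have := hanti (mem_Ici.2 le_rfl) (mem_Ici.2 ht) ht
  calc f t = f t * exp (c * t) * exp (-c * t) := by
        rw [mul_assoc, ← exp_add]; simp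
    _ ≤ _ := by gcongr

lemma continuous_slice {F : ℝ → ℝ → ℝ}
    (hF : ContinuousOn (fun q : ℝ × ℝ => F q.1 q.2) (univ ×ˢ Ioi 0)) {τ : ℝ} (hτ : 0 < τ) :
    Continuous fun θ => F θ τ :=
  hF.comp_continuous (f := fun θ : ℝ => (θ, τ)) (by fun_prop)
    fun θ => show (θ, τ) ∈ univ ×ˢ Ioi (0 : ℝ) from ⟨mem_univ _, hτ⟩

/-- Differentiation under the integral sign over one period. -/
lemma hasDerivAt_integral_period {F F' : ℝ → ℝ → ℝ}
    (hF : ContinuousOn (fun q : ℝ × ℝ => F q.1 q.2) (univ ×ˢ Ioi 0))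
    (hF' : ContinuousOn (fun q : ℝ × ℝ => F' q.1 q.2) (univ ×ˢ Ioi 0))
    (hd : ∀ θ τ, 0 < τ → HasDerivAt (fun s => F θ s) (F' θ τ) τ) {τ : ℝ} (hτ : 0 < τ) :
    HasDerivAt (fun s => ∫ θ in (0 : ℝ)..2 * π, F θ s) (∫ θ in (0 : ℝ)..2 * π, F' θ τ) τ := by
  have hsub : ∀ s ∈ Icc (τ / 2) (2 * τ), 0 < s := fun s hs => by linarith [hs.1]
  obtain ⟨B, hB⟩ := (isCompact_Icc.prod isCompact_Icc).exists_bound_of_continuousOn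
    (s := Icc (0 : ℝ) (2 * π) ×ˢ Icc (τ / 2) (2 * τ))
    (hF'.mono fun q hq => ⟨mem_univ _, hsub _ hq.2⟩)
  have hnhds : Icc (τ / 2) (2 * τ) ∈ nhds τ := Icc_mem_nhds (by linarith) (by linarith)
  refine (intervalIntegral.hasDerivAt_integral_of_dominated_loc_of_deriv_le
    (F := fun s θ => F θ s) (F' := fun s θ => F' θ s) (bound := fun _ => B) hnhds ?_ ?_ ?_ ?_
    intervalIntegrable_const ?_).2
  · filter_upwards [hnhds] with s hs
    exact (continuous_slice hF (hsub s hs)).aestronglyMeasurable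
  · exact (continuous_slice hF hτ).intervalIntegrable _ _
  · exact (continuous_slice hF' hτ).aestronglyMeasurable
  · refine Eventually.of_forall fun θ hθ s hs => hB (θ, s) ⟨?_, hs⟩
    rw [uIoc_of_le two_pi_pos.le] at hθ
    exact Ioc_subset_Icc_self hθ
  · exact Eventually.of_forall fun θ _ s hs => hd θ s (hsub s hs)

section PartialDerivatives

variable {F : ℝ × ℝ → ℝ}

lemma differentiableAt_of_contDiffOn_upper (hF : ContDiffOn ℝ (⊤ : ℕ∞) F (univ ×ˢ Ioi 0))
    {θ τ : ℝ} (hτ : 0 < τ) : DifferentiableAt ℝ F (θ, τ) :=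
  have hat : ContDiffAt ℝ (⊤ : ℕ∞) F (θ, τ) :=
    hF.contDiffAt ((isOpen_univ.prod isOpen_Ioi).mem_nhds ⟨mem_univ _, hτ⟩)
  hat.differentiableAt (by simp)

lemma hasDerivAt_fst_of_contDiffOn (hF : ContDiffOn ℝ (⊤ : ℕ∞) F (univ ×ˢ Ioi 0))
    {θ τ : ℝ} (hτ : 0 < τ) :
    HasDerivAt (fun x => F (x, τ)) (fderiv ℝ F (θ, τ) (1, 0)) θ :=
  (differentiableAt_of_contDiffOn_upper hF hτ).hasFDerivAt.comp_hasDerivAt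
    (f := fun x : ℝ => (x, τ)) θ ((hasDerivAt_id θ).prodMk (hasDerivAt_const θ τ))

lemma hasDerivAt_snd_of_contDiffOn (hF : ContDiffOn ℝ (⊤ : ℕ∞) F (univ ×ˢ Ioi 0))
    {θ τ : ℝ} (hτ : 0 < τ) :
    HasDerivAt (fun s => F (θ, s)) (fderiv ℝ F (θ, τ) (0, 1)) τ :=
  (differentiableAt_of_contDiffOn_upper hF hτ).hasFDerivAt.comp_hasDerivAt
    (f := fun s : ℝ => (θ, s)) τ ((hasDerivAt_const τ θ).prodMk (hasDerivAt_id τ))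

lemma contDiffOn_fderiv_apply_upper (hF : ContDiffOn ℝ (⊤ : ℕ∞) F (univ ×ˢ Ioi 0)) (v : ℝ × ℝ) :
    ContDiffOn ℝ (⊤ : ℕ∞) (fun q => fderiv ℝ F q v) (univ ×ˢ Ioi 0) :=
  (hF.fderiv_of_isOpen (isOpen_univ.prod isOpen_Ioi) (by simp)).clm_apply contDiffOn_const

lemma fderiv_fderiv_apply_comm (hF : ContDiffOn ℝ (⊤ : ℕ∞) F (univ ×ˢ Ioi 0)) {θ τ : ℝ}
    (hτ : 0 < τ) (v w : ℝ × ℝ) :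
    fderiv ℝ (fun q => fderiv ℝ F q v) (θ, τ) w = fderiv ℝ (fun q => fderiv ℝ F q w) (θ, τ) v := by
  have hat : ContDiffAt ℝ (⊤ : ℕ∞) F (θ, τ) :=
    hF.contDiffAt ((isOpen_univ.prod isOpen_Ioi).mem_nhds ⟨mem_univ _, hτ⟩)
  have hd : DifferentiableAt ℝ (fderiv ℝ F) (θ, τ) :=
    (hat.fderiv_right (m := 1) (WithTop.coe_le_coe.2 le_top : ((1 + 1 : ℕ∞) : WithTop ℕ∞) ≤ _)).differentiableAt (by simp)
  have hsymm : IsSymmSndFDerivAt ℝ F (θ, τ) :=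
    hat.isSymmSndFDerivAt (by
      rw [minSmoothness_of_isRCLikeNormedField]
      exact (WithTop.coe_le_coe.2 le_top : ((2 : ℕ∞) : WithTop ℕ∞) ≤ _))
  rw [fderiv_clm_apply hd (differentiableAt_const _), fderiv_clm_apply hd (differentiableAt_const _)]
  simpa using hsymm w v

end PartialDerivatives

lemma HasDerivAt.periodic {f f' : ℝ → ℝ} (hf : ∀ x, HasDerivAt f (f' x) x) {c : ℝ}
    (hper : Function.Periodic f c) : Function.Periodic f' c := fun x =>
  ((hf (x + c)).comp_add_const x c).unique ((hf x).congr_of_eventuallyEq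
    (Eventually.of_forall hper))

/-- A positive `2π`-periodic solution `u` of the normalized equation
`∂u/∂τ = p u ^ q (∂²u/∂θ² + u) - p u`, `q = 1 + 1 / p`, for positive times, with its first three
angular derivatives and the induced evolution equations. -/
structure IsNormalizedFlow (p q : ℝ) (u u₁ u₂ u₃ v₂ : ℝ → ℝ → ℝ) : Prop where
  one_le : 1 ≤ p
  exponent : p * q = p + 1
  pos : ∀ θ τ, 0 < τ → 0 < u θ τ
  periodic : ∀ τ, Function.Periodic (fun θ => u θ τ) (2 * π)
  periodic₁ : ∀ τ, 0 < τ → Function.Periodic (fun θ => u₁ θ τ) (2 * π)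
  periodic₂ : ∀ τ, 0 < τ → Function.Periodic (fun θ => u₂ θ τ) (2 * π)
  periodic₃ : ∀ τ, 0 < τ → Function.Periodic (fun θ => u₃ θ τ) (2 * π)
  cont : ContinuousOn (fun q : ℝ × ℝ => u q.1 q.2) (univ ×ˢ Ioi 0)
  cont₁ : ContinuousOn (fun q : ℝ × ℝ => u₁ q.1 q.2) (univ ×ˢ Ioi 0)
  cont₂ : ContinuousOn (fun q : ℝ × ℝ => u₂ q.1 q.2) (univ ×ˢ Ioi 0)
  cont₃ : ContinuousOn (fun q : ℝ × ℝ => u₃ q.1 q.2) (univ ×ˢ Ioi 0)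
  cont_v₂ : ContinuousOn (fun q : ℝ × ℝ => v₂ q.1 q.2) (univ ×ˢ Ioi 0)
  deriv₁ : ∀ θ τ, 0 < τ → HasDerivAt (fun x => u x τ) (u₁ θ τ) θ
  deriv₂ : ∀ θ τ, 0 < τ → HasDerivAt (fun x => u₁ x τ) (u₂ θ τ) θ
  deriv₃ : ∀ θ τ, 0 < τ → HasDerivAt (fun x => u₂ x τ) (u₃ θ τ) θ
  evol : ∀ θ τ, 0 < τ →
    HasDerivAt (fun s => u θ s) (p * u θ τ ^ q * (u₂ θ τ + u θ τ) - p * u θ τ) τ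
  evol₁ : ∀ θ τ, 0 < τ → HasDerivAt (fun s => u₁ θ s)
    (p * u θ τ ^ q * u₃ θ τ + p * q * u θ τ ^ (q - 1) * u₁ θ τ * u₂ θ τ
      + p * (q + 1) * u θ τ ^ q * u₁ θ τ - p * u₁ θ τ) τ
  evol₂ : ∀ θ τ, 0 < τ → HasDerivAt (fun s => u₂ θ s) (v₂ θ τ) τ
  deriv_evol₁ : ∀ θ τ, 0 < τ → HasDerivAt (fun x =>
    p * u x τ ^ q * u₃ x τ + p * q * u x τ ^ (q - 1) * u₁ x τ * u₂ x τ
      + p * (q + 1) * u x τ ^ q * u₁ x τ - p * u₁ x τ) (v₂ θ τ) θ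

lemma exists_isNormalizedFlow {p : ℝ} (hp : 1 ≤ p) {K : ℝ → ℝ → ℝ}
    (hsmooth : ContDiffOn ℝ (⊤ : ℕ∞) (fun q : ℝ × ℝ => K q.1 q.2) (univ ×ˢ Ioi 0))
    (hper : ∀ τ : ℝ, Function.Periodic (fun θ => K θ τ) (2 * π))
    (hpos : ∀ θ τ : ℝ, 0 < τ → 0 < K θ τ)
    (hpde : ∀ θ : ℝ, ∀ τ ∈ Ioi (0 : ℝ),
      deriv (fun s => K θ s) τ =
        p * K θ τ ^ (1 + 1 / p) * deriv (deriv (fun x => K x τ)) θ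
          + p * K θ τ ^ (2 + 1 / p) - p * K θ τ) :
    ∃ u₁ u₂ u₃ v₂, IsNormalizedFlow p (1 + 1 / p) K u₁ u₂ u₃ v₂ := by
  have s1 := contDiffOn_fderiv_apply_upper hsmooth (1, 0)
  have s2 := contDiffOn_fderiv_apply_upper s1 (1, 0)
  have s3 := contDiffOn_fderiv_apply_upper s2 (1, 0)
  have t2 := contDiffOn_fderiv_apply_upper s2 (0, 1)
  set F₁ : ℝ × ℝ → ℝ := fun q => fderiv ℝ (fun q : ℝ × ℝ => K q.1 q.2) q (1, 0)
  set F₂ : ℝ × ℝ → ℝ := fun q => fderiv ℝ F₁ q (1, 0)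
  set F₃ : ℝ × ℝ → ℝ := fun q => fderiv ℝ F₂ q (1, 0)
  have d1 : ∀ θ τ, 0 < τ → HasDerivAt (fun x => K x τ) (F₁ (θ, τ)) θ := fun θ τ hτ =>
    hasDerivAt_fst_of_contDiffOn hsmooth hτ
  have d2 : ∀ θ τ, 0 < τ → HasDerivAt (fun x => F₁ (x, τ)) (F₂ (θ, τ)) θ := fun θ τ hτ =>
    hasDerivAt_fst_of_contDiffOn s1 hτ
  have d3 : ∀ θ τ, 0 < τ → HasDerivAt (fun x => F₂ (x, τ)) (F₃ (θ, τ)) θ := fun θ τ hτ =>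
    hasDerivAt_fst_of_contDiffOn s2 hτ
  have e0 : ∀ θ τ, 0 < τ → fderiv ℝ (fun q : ℝ × ℝ => K q.1 q.2) (θ, τ) (0, 1)
      = p * K θ τ ^ (1 + 1 / p) * (F₂ (θ, τ) + K θ τ) - p * K θ τ := by
    intro θ τ hτ
    have h := hpde θ τ hτ
    have hd : deriv (fun x => K x τ) = fun x => F₁ (x, τ) := funext fun x => (d1 x τ hτ).deriv
    rw [(hasDerivAt_snd_of_contDiffOn hsmooth hτ).deriv, hd, (d2 θ τ hτ).deriv,
      show 2 + 1 / p = (1 + 1 / p) + 1 by ring, rpow_add_one (hpos θ τ hτ).ne'] at h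
    rw [h]
    ring
  have e1 : ∀ θ τ, 0 < τ → fderiv ℝ F₁ (θ, τ) (0, 1)
      = p * K θ τ ^ (1 + 1 / p) * F₃ (θ, τ)
        + p * (1 + 1 / p) * K θ τ ^ (1 + 1 / p - 1) * F₁ (θ, τ) * F₂ (θ, τ)
        + p * (1 + 1 / p + 1) * K θ τ ^ (1 + 1 / p) * F₁ (θ, τ) - p * F₁ (θ, τ) := by
    intro θ τ hτ
    rw [fderiv_fderiv_apply_comm hsmooth hτ]
    have hpow := (d1 θ τ hτ).rpow_const (p := 1 + 1 / p) (Or.inl (hpos θ τ hτ).ne')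
    have h := (((hpow.const_mul p).mul ((d3 θ τ hτ).add (d1 θ τ hτ))).sub
      ((d1 θ τ hτ).const_mul p))
    refine ((hasDerivAt_fst_of_contDiffOn
      (contDiffOn_fderiv_apply_upper hsmooth (0, 1)) hτ).congr_of_eventuallyEq
        (Eventually.of_forall fun x => (e0 x τ hτ).symm)).unique (h.congr_deriv ?_)
    have hK : K θ τ ^ (1 + 1 / p) = K θ τ ^ (1 + 1 / p - 1) * K θ τ := by
      rw [← rpow_add_one (hpos θ τ hτ).ne']
      congr 1
      ring
    rw [hK]
    simp only [Pi.add_apply]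
    ring
  refine ⟨fun θ τ => F₁ (θ, τ), fun θ τ => F₂ (θ, τ), fun θ τ => F₃ (θ, τ),
    fun θ τ => fderiv ℝ F₂ (θ, τ) (0, 1), ?_⟩
  have per1 : ∀ τ, 0 < τ → Function.Periodic (fun θ => F₁ (θ, τ)) (2 * π) := fun τ hτ =>
    HasDerivAt.periodic (d1 · τ hτ) (hper τ)
  have per2 : ∀ τ, 0 < τ → Function.Periodic (fun θ => F₂ (θ, τ)) (2 * π) := fun τ hτ =>
    HasDerivAt.periodic (d2 · τ hτ) (per1 τ hτ)
  exact {
    one_le := hp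
    exponent := by field_simp
    pos := hpos
    periodic := hper
    periodic₁ := per1
    periodic₂ := per2
    periodic₃ := fun τ hτ => HasDerivAt.periodic (d3 · τ hτ) (per2 τ hτ)
    cont := hsmooth.continuousOn
    cont₁ := s1.continuousOn
    cont₂ := s2.continuousOn
    cont₃ := s3.continuousOn
    cont_v₂ := t2.continuousOn
    deriv₁ := d1
    deriv₂ := d2
    deriv₃ := d3
    evol := fun θ τ hτ => e0 θ τ hτ ▸ hasDerivAt_snd_of_contDiffOn hsmooth hτ
    evol₁ := fun θ τ hτ => e1 θ τ hτ ▸ hasDerivAt_snd_of_contDiffOn s1 hτ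
    evol₂ := fun θ τ hτ => hasDerivAt_snd_of_contDiffOn s2 hτ
    deriv_evol₁ := fun θ τ hτ => by
      rw [fderiv_fderiv_apply_comm s1 hτ]
      exact (hasDerivAt_fst_of_contDiffOn
        (contDiffOn_fderiv_apply_upper s1 (0, 1)) hτ).congr_of_eventuallyEq
          (Eventually.of_forall fun x => (e1 x τ hτ).symm) }

lemma eq_zero_of_hasDerivAt_self_of_bounded {m : ℝ → ℝ} {T B : ℝ}
    (hm : ∀ t, 0 < t → HasDerivAt m (m t) t) (hB : ∀ t, T ≤ t → |m t| ≤ B) {t : ℝ} (ht : 0 < t) :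
    m t = 0 := by
  by_contra hne
  have hc : 0 < m t ^ 2 := by positivity
  set s := max t T + B ^ 2 / m t ^ 2 with hs
  have hs1 : t + B ^ 2 / m t ^ 2 ≤ s := by
    linarith [le_max_left t T]
  have hq : 0 ≤ B ^ 2 / m t ^ 2 := by positivity
  have hts : t ≤ s := by linarith
  have hTs : T ≤ s := (le_max_right t T).trans (by linarith)
  have hgrow := le_mul_exp_of_deriv_le (f := fun s => -(m s ^ 2)) (f' := fun s => -(2 * m s ^ 2))
    (T := t) (c := -2) (fun r hr => (((hm r (ht.trans_le hr)).pow 2).neg).congr_deriv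
      (by simp; ring)) (fun r _ => by linarith) hts
  have hexp : exp (-2 * t) * exp (- -2 * s) = exp (2 * (s - t)) := by
    rw [← exp_add]; ring_nf
  have h1 : m t ^ 2 * exp (2 * (s - t)) ≤ m s ^ 2 := by
    rw [mul_assoc, hexp] at hgrow
    linarith
  have h2 : m s ^ 2 ≤ B ^ 2 := by
    rw [← sq_abs]
    exact pow_le_pow_left₀ (abs_nonneg _) (hB s hTs) 2
  have h3 : 2 * (B ^ 2 / m t ^ 2) + 1 ≤ exp (2 * (s - t)) :=
    (by linarith : _ ≤ 2 * (s - t) + 1).trans (add_one_le_exp _)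
  have h4 : m t ^ 2 * (2 * (B ^ 2 / m t ^ 2) + 1) = 2 * B ^ 2 + m t ^ 2 := by
    field_simp
  nlinarith [mul_le_mul_of_nonneg_left h3 hc.le, sq_nonneg B]

lemma sq_integral_mul_le_of_orthogonal {f c w : ℝ → ℝ} {η : ℝ} (hf : Continuous f)
    (hc : Continuous c) (hw : Continuous w) (hc1 : ∀ x, |c x| ≤ 1) (hw1 : ∀ x, |w x - 1| ≤ η)
    (horth : ∫ x in (0 : ℝ)..2 * π, c x * w x * f x = 0) :
    (∫ x in (0 : ℝ)..2 * π, f x * c x) ^ 2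
      ≤ η ^ 2 * (2 * π * ∫ x in (0 : ℝ)..2 * π, f x ^ 2) := by
  have hη : 0 ≤ η := (abs_nonneg _).trans (hw1 0)
  have h1 : ∫ x in (0 : ℝ)..2 * π, f x * c x
      = ∫ x in (0 : ℝ)..2 * π, (f x * c x - c x * w x * f x) := by
    rw [intervalIntegral.integral_sub, horth, sub_zero]
    all_goals exact Continuous.intervalIntegrable (by fun_prop) _ _
  have h2 : |∫ x in (0 : ℝ)..2 * π, f x * c x| ≤ η * ∫ x in (0 : ℝ)..2 * π, |f x| := by
    rw [h1, ← intervalIntegral.integral_const_mul]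
    refine (intervalIntegral.abs_integral_le_integral_abs two_pi_pos.le).trans ?_
    refine intervalIntegral.integral_mono_on two_pi_pos.le
      (Continuous.intervalIntegrable (by fun_prop) _ _)
      (Continuous.intervalIntegrable (by fun_prop) _ _) fun x _ => ?_
    rw [show f x * c x - c x * w x * f x = -(c x * (w x - 1) * f x) by ring, abs_neg, abs_mul,
      abs_mul]
    gcongr
    calc |c x| * |w x - 1| ≤ 1 * η := by gcongr; exacts [hc1 x, hw1 x]
      _ = η := one_mul η
  calc (∫ x in (0 : ℝ)..2 * π, f x * c x) ^ 2
      = |∫ x in (0 : ℝ)..2 * π, f x * c x| ^ 2 := (sq_abs _).symm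
    _ ≤ (η * ∫ x in (0 : ℝ)..2 * π, |f x|) ^ 2 := by gcongr
    _ = η ^ 2 * (∫ x in (0 : ℝ)..2 * π, |f x|) ^ 2 := by ring
    _ ≤ _ := by gcongr; exact sq_integral_abs_le hf

lemma apply_two_pi_eq_apply_zero {f : ℝ → ℝ} (hf : Function.Periodic f (2 * π)) : f (2 * π) = f 0 := by
  simpa using hf 0

namespace IsNormalizedFlow

variable {p q : ℝ} {u u₁ u₂ u₃ v₂ : ℝ → ℝ → ℝ}

lemma cont_rpow (h : IsNormalizedFlow p q u u₁ u₂ u₃ v₂) (r : ℝ) :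
    ContinuousOn (fun q : ℝ × ℝ => u q.1 q.2 ^ r) (univ ×ˢ Ioi 0) :=
  h.cont.rpow_const fun x hx => Or.inl (h.pos x.1 x.2 hx.2).ne'

lemma continuous_rpow (h : IsNormalizedFlow p q u u₁ u₂ u₃ v₂) (r : ℝ) {τ : ℝ} (hτ : 0 < τ) :
    Continuous fun θ => u θ τ ^ r :=
  continuous_slice (F := fun θ τ => u θ τ ^ r) (h.cont_rpow r) hτ

lemma moment_evolution (h : IsNormalizedFlow p q u u₁ u₂ u₃ v₂) {φ φ' : ℝ → ℝ}
    (hφ : ∀ x, HasDerivAt φ (φ' x) x) (hφ' : ∀ x, HasDerivAt φ' (-φ x) x)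
    (hper : Function.Periodic φ (2 * π)) {τ : ℝ} (hτ : 0 < τ) :
    HasDerivAt (fun s => ∫ θ in (0 : ℝ)..2 * π, φ θ * u θ s ^ (1 - q))
      (∫ θ in (0 : ℝ)..2 * π, φ θ * u θ τ ^ (1 - q)) τ := by
  have hφc : Continuous φ := continuous_iff_continuousAt.2 fun x => (hφ x).continuousAt
  have hφc' : Continuous φ' := continuous_iff_continuousAt.2 fun x => (hφ' x).continuousAt
  have hc := h.cont
  have hc2 := h.cont₂
  have hr := h.cont_rpow (1 - q)
  have key := hasDerivAt_integral_period (F := fun θ s => φ θ * u θ s ^ (1 - q))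
    (F' := fun θ s => φ θ * u θ s ^ (1 - q) - (φ θ * u₂ θ s + φ θ * u θ s))
    (by fun_prop) (by fun_prop) (fun θ s hs => by
      have hu := h.pos θ s hs
      refine (((h.evol θ s hs).rpow_const (p := 1 - q) (Or.inl hu.ne')).const_mul
        (φ θ)).congr_deriv ?_
      have e1 : u θ s ^ (1 - q) = u θ s ^ (1 - q - 1) * u θ s := by
        rw [← rpow_add_one hu.ne']; ring_nf
      have e2 : u θ s ^ q * u θ s ^ (1 - q - 1) = 1 := by
        rw [← rpow_add hu]; simp
      have e3 : p * (1 - q) = -1 := by linarith [h.exponent]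
      rw [e1]
      linear_combination (φ θ * u θ s ^ (1 - q - 1)
        * (u θ s ^ q * (u₂ θ s + u θ s) - u θ s)) * e3 - φ θ * (u₂ θ s + u θ s) * e2) hτ
  have hs0 := continuous_slice hc hτ
  have hs1 := continuous_slice h.cont₁ hτ
  have hs2 := continuous_slice hc2 hτ
  have hsr := h.continuous_rpow (1 - q) hτ
  have hper' := HasDerivAt.periodic hφ hper
  have ibp : ∫ θ in (0 : ℝ)..2 * π, (φ θ * u₂ θ τ + φ θ * u θ τ) = 0 := by
    rw [intervalIntegral.integral_eq_sub_of_hasDerivAt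
      (f := fun θ => φ θ * u₁ θ τ - φ' θ * u θ τ)
      (fun x _ => (((hφ x).mul (h.deriv₂ x τ hτ)).sub
        ((hφ' x).mul (h.deriv₁ x τ hτ))).congr_deriv (by ring))
      (Continuous.intervalIntegrable (by fun_prop) _ _), apply_two_pi_eq_apply_zero hper, apply_two_pi_eq_apply_zero hper',
      apply_two_pi_eq_apply_zero (h.periodic τ), apply_two_pi_eq_apply_zero (h.periodic₁ τ hτ), sub_self]
  rwa [intervalIntegral.integral_sub (Continuous.intervalIntegrable (by fun_prop) _ _)
    (Continuous.intervalIntegrable (by fun_prop) _ _), ibp, sub_zero] at key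

/-- The unstable first modes vanish for a flow that stays bounded. -/
lemma integral_mul_eq_zero (h : IsNormalizedFlow p q u u₁ u₂ u₃ v₂) {φ φ' : ℝ → ℝ}
    (hφ : ∀ x, HasDerivAt φ (φ' x) x) (hφ' : ∀ x, HasDerivAt φ' (-φ x) x)
    (hper : Function.Periodic φ (2 * π)) (hφ'1 : ∀ x, |φ' x| ≤ 1) {T B : ℝ} (hT : 0 < T)
    (hB : ∀ θ τ, T ≤ τ → u θ τ ^ (1 - q) ≤ B) {τ : ℝ} (hτ : 0 < τ) :
    ∫ θ in (0 : ℝ)..2 * π, φ θ * u θ τ ^ (-q) * u₁ θ τ = 0 := by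
  have hφc : Continuous φ := continuous_iff_continuousAt.2 fun x => (hφ x).continuousAt
  have hφc' : Continuous φ' := continuous_iff_continuousAt.2 fun x => (hφ' x).continuousAt
  have hzero : ∫ θ in (0 : ℝ)..2 * π, φ' θ * u θ τ ^ (1 - q) = 0 := by
    refine eq_zero_of_hasDerivAt_self_of_bounded (T := T) (B := B * |2 * π - 0|)
      (m := fun τ => ∫ θ in (0 : ℝ)..2 * π, φ' θ * u θ τ ^ (1 - q))
      (fun t ht => h.moment_evolution hφ' (fun x => (hφ x).neg) (HasDerivAt.periodic hφ hper) ht) (fun t ht => ?_) hτ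
    rw [← Real.norm_eq_abs]
    refine intervalIntegral.norm_integral_le_of_norm_le_const fun θ _ => ?_
    have hnn : 0 ≤ u θ t ^ (1 - q) := (rpow_pos_of_pos (h.pos θ t (hT.trans_le ht)) _).le
    rw [Real.norm_eq_abs, abs_mul, abs_of_nonneg hnn]
    calc |φ' θ| * u θ t ^ (1 - q) ≤ 1 * B := by gcongr; exacts [hφ'1 θ, hB θ t ht]
      _ = B := one_mul B
  have hs1 := continuous_slice h.cont₁ hτ
  have hsr := h.continuous_rpow (1 - q) hτ
  have hsq := h.continuous_rpow (-q) hτ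
  have hq : 1 - q ≠ 0 := fun h0 => by
    have := h.exponent
    rw [← sub_eq_zero.1 h0] at this
    linarith
  have ibp : ∫ θ in (0 : ℝ)..2 * π,
      (φ' θ * u θ τ ^ (1 - q) + (1 - q) * (φ θ * u θ τ ^ (-q) * u₁ θ τ)) = 0 := by
    rw [intervalIntegral.integral_eq_sub_of_hasDerivAt (f := fun θ => φ θ * u θ τ ^ (1 - q))
      (fun x _ => ((hφ x).mul ((h.deriv₁ x τ hτ).rpow_const (p := 1 - q)
        (Or.inl (h.pos x τ hτ).ne'))).congr_deriv (by
          rw [show 1 - q - 1 = -q by ring]; ring))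
      (Continuous.intervalIntegrable (by fun_prop) _ _), apply_two_pi_eq_apply_zero hper,
      apply_two_pi_eq_apply_zero (h.periodic τ), sub_self]
  rw [intervalIntegral.integral_add (Continuous.intervalIntegrable (by fun_prop) _ _)
    (Continuous.intervalIntegrable (by fun_prop) _ _), hzero, zero_add,
    intervalIntegral.integral_const_mul] at ibp
  exact (mul_eq_zero.1 ibp).resolve_left hq

lemma energy_evolution (h : IsNormalizedFlow p q u u₁ u₂ u₃ v₂) {τ : ℝ} (hτ : 0 < τ) :
    HasDerivAt (fun s => ∫ θ in (0 : ℝ)..2 * π, u₁ θ s ^ 2)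
      (∫ θ in (0 : ℝ)..2 * π, (-2 * p * u θ τ ^ q * u₂ θ τ ^ 2
        + 2 * p * (q + 1) * u θ τ ^ q * u₁ θ τ ^ 2 - 2 * p * u₁ θ τ ^ 2)) τ := by
  have hc1 := h.cont₁
  have hc2 := h.cont₂
  have hc3 := h.cont₃
  have hr := h.cont_rpow q
  have hr1 := h.cont_rpow (q - 1)
  have key := hasDerivAt_integral_period (F := fun θ s => u₁ θ s ^ 2)
    (F' := fun θ s => (-2 * p * u θ s ^ q * u₂ θ s ^ 2
        + 2 * p * (q + 1) * u θ s ^ q * u₁ θ s ^ 2 - 2 * p * u₁ θ s ^ 2)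
        + 2 * p * (u₂ θ s * u θ s ^ q * u₂ θ s + u₁ θ s * (q * u θ s ^ (q - 1) * u₁ θ s) * u₂ θ s
          + u₁ θ s * u θ s ^ q * u₃ θ s))
    (by fun_prop) (by fun_prop)
    (fun θ s hs => ((h.evol₁ θ s hs).pow 2).congr_deriv (by push_cast; ring)) hτ
  have hs1 := continuous_slice hc1 hτ
  have hs2 := continuous_slice hc2 hτ
  have hs3 := continuous_slice hc3 hτ
  have hsr := h.continuous_rpow q hτ
  have hsr1 := h.continuous_rpow (q - 1) hτ
  have ibp : ∫ θ in (0 : ℝ)..2 * π, (u₂ θ τ * u θ τ ^ q * u₂ θ τ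
      + u₁ θ τ * (q * u θ τ ^ (q - 1) * u₁ θ τ) * u₂ θ τ + u₁ θ τ * u θ τ ^ q * u₃ θ τ) = 0 := by
    rw [intervalIntegral.integral_eq_sub_of_hasDerivAt
      (f := fun θ => u₁ θ τ * u θ τ ^ q * u₂ θ τ)
      (fun x _ => (((h.deriv₂ x τ hτ).mul ((h.deriv₁ x τ hτ).rpow_const (p := q)
        (Or.inl (h.pos x τ hτ).ne'))).mul (h.deriv₃ x τ hτ)).congr_deriv (by
          simp only [Pi.mul_apply]; ring))
      (Continuous.intervalIntegrable (by fun_prop) _ _), apply_two_pi_eq_apply_zero (h.periodic τ),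
      apply_two_pi_eq_apply_zero (h.periodic₁ τ hτ), apply_two_pi_eq_apply_zero (h.periodic₂ τ hτ), sub_self]
  rwa [intervalIntegral.integral_add (Continuous.intervalIntegrable (by fun_prop) _ _)
    (Continuous.intervalIntegrable (by fun_prop) _ _), intervalIntegral.integral_const_mul, ibp,
    mul_zero, add_zero] at key

lemma energy₂_evolution (h : IsNormalizedFlow p q u u₁ u₂ u₃ v₂) {τ : ℝ} (hτ : 0 < τ) :
    HasDerivAt (fun s => ∫ θ in (0 : ℝ)..2 * π, u₂ θ s ^ 2)
      (∫ θ in (0 : ℝ)..2 * π, -2 * u₃ θ τ * (p * u θ τ ^ q * u₃ θ τ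
        + p * q * u θ τ ^ (q - 1) * u₁ θ τ * u₂ θ τ
        + p * (q + 1) * u θ τ ^ q * u₁ θ τ - p * u₁ θ τ)) τ := by
  have hc2 := h.cont₂
  have hcv := h.cont_v₂
  have key := hasDerivAt_integral_period (F := fun θ s => u₂ θ s ^ 2)
    (F' := fun θ s => 2 * u₂ θ s * v₂ θ s) (by fun_prop) (by fun_prop)
    (fun θ s hs => ((h.evol₂ θ s hs).pow 2).congr_deriv (by push_cast; ring)) hτ
  have hs1 := continuous_slice h.cont₁ hτ
  have hs2 := continuous_slice hc2 hτ
  have hs3 := continuous_slice h.cont₃ hτ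
  have hsv := continuous_slice hcv hτ
  have hsr := h.continuous_rpow q hτ
  have hsr1 := h.continuous_rpow (q - 1) hτ
  refine key.congr_deriv ?_
  rw [← sub_eq_zero, ← intervalIntegral.integral_sub
    (Continuous.intervalIntegrable (by fun_prop) _ _)
    (Continuous.intervalIntegrable (by fun_prop) _ _),
    intervalIntegral.integral_eq_sub_of_hasDerivAt
      (f := fun x => 2 * u₂ x τ * (p * u x τ ^ q * u₃ x τ
        + p * q * u x τ ^ (q - 1) * u₁ x τ * u₂ x τ
        + p * (q + 1) * u x τ ^ q * u₁ x τ - p * u₁ x τ))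
      (fun x _ => (((h.deriv₃ x τ hτ).const_mul 2).mul (h.deriv_evol₁ x τ hτ)).congr_deriv
        (by ring))
      (Continuous.intervalIntegrable (by fun_prop) _ _), apply_two_pi_eq_apply_zero (h.periodic τ),
      apply_two_pi_eq_apply_zero (h.periodic₁ τ hτ), apply_two_pi_eq_apply_zero (h.periodic₂ τ hτ),
      apply_two_pi_eq_apply_zero (h.periodic₃ τ hτ), sub_self]

/-- The spectral gap: near the stationary solution, `u₁` is almost orthogonal to the first modes. -/
lemma spectral_gap (h : IsNormalizedFlow p q u u₁ u₂ u₃ v₂) {T B η τ : ℝ} (hT : 0 < T)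
    (hB : ∀ θ τ, T ≤ τ → u θ τ ^ (1 - q) ≤ B) (hτ : 0 < τ)
    (hη : ∀ θ, |u θ τ ^ (-q) - 1| ≤ η) :
    (4 - 12 * η ^ 2) * (∫ θ in (0 : ℝ)..2 * π, u₁ θ τ ^ 2)
      ≤ ∫ θ in (0 : ℝ)..2 * π, u₂ θ τ ^ 2 := by
  have hs1 := continuous_slice h.cont₁ hτ
  have hs2 := continuous_slice h.cont₂ hτ
  have hsr := h.continuous_rpow (-q) hτ
  have hcos : ∫ θ in (0 : ℝ)..2 * π, cos θ * u θ τ ^ (-q) * u₁ θ τ = 0 :=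
    h.integral_mul_eq_zero (φ' := fun x => -sin x) hasDerivAt_cos (fun x => (hasDerivAt_sin x).neg)
      cos_periodic (fun x => by rw [abs_neg]; exact abs_sin_le_one x) hT hB hτ
  have hsin : ∫ θ in (0 : ℝ)..2 * π, sin θ * u θ τ ^ (-q) * u₁ θ τ = 0 :=
    h.integral_mul_eq_zero hasDerivAt_sin hasDerivAt_cos sin_periodic abs_cos_le_one hT hB hτ
  have hmean : ∫ θ in (0 : ℝ)..2 * π, u₁ θ τ = 0 := by
    rw [intervalIntegral.integral_eq_sub_of_hasDerivAt (fun x _ => h.deriv₁ x τ hτ)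
      (hs1.intervalIntegrable _ _), apply_two_pi_eq_apply_zero (h.periodic τ), sub_self]
  have hw := wirtinger_second_mode (h.deriv₂ · τ hτ) hs2 (apply_two_pi_eq_apply_zero (h.periodic₁ τ hτ)) hmean
  have h1 := sq_integral_mul_le_of_orthogonal hs1 continuous_cos hsr abs_cos_le_one hη hcos
  have h2 := sq_integral_mul_le_of_orthogonal hs1 continuous_sin hsr abs_sin_le_one hη hsin
  have h3 := mul_le_mul_of_nonneg_left (add_le_add h1 h2) (by positivity : 0 ≤ 3 / π)
  have h4 : ∀ X : ℝ, 3 / π * (η ^ 2 * (2 * π * X) + η ^ 2 * (2 * π * X)) = 12 * η ^ 2 * X := by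
    intro X
    field_simp
    ring
  rw [h4] at h3
  linarith

lemma energy_deriv_le (h : IsNormalizedFlow p q u u₁ u₂ u₃ v₂) {β τ : ℝ} (hβ0 : 0 < β)
    (hβ : β < 1) (hτ : 0 < τ)
    (hη : ∀ θ, |u θ τ ^ q - 1| ≤ (1 - β) / 10)
    (hgap : (4 - 12 * ((1 - β) / 10) ^ 2) * (∫ θ in (0 : ℝ)..2 * π, u₁ θ τ ^ 2)
      ≤ ∫ θ in (0 : ℝ)..2 * π, u₂ θ τ ^ 2) :
    (∫ θ in (0 : ℝ)..2 * π, (-2 * p * u θ τ ^ q * u₂ θ τ ^ 2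
        + 2 * p * (q + 1) * u θ τ ^ q * u₁ θ τ ^ 2 - 2 * p * u₁ θ τ ^ 2))
      ≤ -(4 * β * p) * ∫ θ in (0 : ℝ)..2 * π, u₁ θ τ ^ 2 := by
  have hs1 := continuous_slice h.cont₁ hτ
  have hs2 := continuous_slice h.cont₂ hτ
  have hsr := h.continuous_rpow q hτ
  have hp := h.one_le
  have hpq := h.exponent
  set η := (1 - β) / 10 with hηd
  have hη0 : 0 < η := by positivity
  have hη1 : η ≤ 1 / 10 := by linarith
  have hle : (∫ θ in (0 : ℝ)..2 * π, (-2 * p * u θ τ ^ q * u₂ θ τ ^ 2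
        + 2 * p * (q + 1) * u θ τ ^ q * u₁ θ τ ^ 2 - 2 * p * u₁ θ τ ^ 2))
      ≤ ∫ θ in (0 : ℝ)..2 * π, (-(2 * p * (1 - η)) * u₂ θ τ ^ 2
        + (2 * (2 * p + 1) * (1 + η) - 2 * p) * u₁ θ τ ^ 2) := by
    refine intervalIntegral.integral_mono_on two_pi_pos.le
      (Continuous.intervalIntegrable (by fun_prop) _ _)
      (Continuous.intervalIntegrable (by fun_prop) _ _) fun θ _ => ?_
    obtain ⟨h1, h2⟩ := abs_le.1 (hη θ)
    have e1 : p * (1 - η) * u₂ θ τ ^ 2 ≤ p * u θ τ ^ q * u₂ θ τ ^ 2 := by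
      gcongr; linarith
    have e2 : (2 * p + 1) * u θ τ ^ q * u₁ θ τ ^ 2 ≤ (2 * p + 1) * (1 + η) * u₁ θ τ ^ 2 := by
      gcongr; linarith
    have e3 : p * (q + 1) * u θ τ ^ q * u₁ θ τ ^ 2 = (2 * p + 1) * u θ τ ^ q * u₁ θ τ ^ 2 := by
      rw [show p * (q + 1) = 2 * p + 1 by linarith]
    linarith
  refine hle.trans ?_
  rw [intervalIntegral.integral_add (Continuous.intervalIntegrable (by fun_prop) _ _)
    (Continuous.intervalIntegrable (by fun_prop) _ _), intervalIntegral.integral_const_mul,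
    intervalIntegral.integral_const_mul]
  set E := ∫ θ in (0 : ℝ)..2 * π, u₁ θ τ ^ 2
  have hE : 0 ≤ E := intervalIntegral.integral_nonneg two_pi_pos.le fun x _ => sq_nonneg _
  have hgap' := mul_le_mul_of_nonneg_left hgap (by nlinarith : 0 ≤ 2 * p * (1 - η))
  have hcoef : -(2 * p * (1 - η)) * (4 - 12 * η ^ 2) + (2 * (2 * p + 1) * (1 + η) - 2 * p)
      ≤ -(4 * β * p) := by
    have e : β = 1 - 10 * η := by linarith
    rw [e]
    have t1 : p * η ^ 2 ≤ p * η * (1 / 10) := by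
      rw [sq, ← mul_assoc]; gcongr
    have t2 : η ≤ p * η := by nlinarith
    have t3 : 0 ≤ p * η ^ 3 := by positivity
    nlinarith
  have := mul_le_mul_of_nonneg_right hcoef hE
  linarith

lemma energy₂_deriv_le (h : IsNormalizedFlow p q u u₁ u₂ u₃ v₂) {τ : ℝ} (hτ : 0 < τ)
    (hη : ∀ θ, |u θ τ ^ q - 1| ≤ 1 / 2) (hη' : ∀ θ, |u θ τ ^ (q - 1) - 1| ≤ 1)
    (hsmall : 512 * π * (∫ θ in (0 : ℝ)..2 * π, u₁ θ τ ^ 2) ≤ 1) :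
    (∫ θ in (0 : ℝ)..2 * π, -2 * u₃ θ τ * (p * u θ τ ^ q * u₃ θ τ
        + p * q * u θ τ ^ (q - 1) * u₁ θ τ * u₂ θ τ
        + p * (q + 1) * u θ τ ^ q * u₁ θ τ - p * u₁ θ τ))
      ≤ -(4 * p) * (∫ θ in (0 : ℝ)..2 * π, u₂ θ τ ^ 2)
        + 160 * p * ∫ θ in (0 : ℝ)..2 * π, u₁ θ τ ^ 2 := by
  have hs1 := continuous_slice h.cont₁ hτ
  have hs2 := continuous_slice h.cont₂ hτ
  have hs3 := continuous_slice h.cont₃ hτ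
  have hsr := h.continuous_rpow q hτ
  have hsr1 := h.continuous_rpow (q - 1) hτ
  have hp := h.one_le
  have hpq := h.exponent
  have hinterp := interpolation_deriv_sq (h.deriv₂ · τ hτ) (h.deriv₃ · τ hτ) hs3
    (apply_two_pi_eq_apply_zero (h.periodic₁ τ hτ)) (apply_two_pi_eq_apply_zero (h.periodic₂ τ hτ)) 8
  set E := ∫ θ in (0 : ℝ)..2 * π, u₁ θ τ ^ 2 with hEd
  set E₂ := ∫ θ in (0 : ℝ)..2 * π, u₂ θ τ ^ 2 with hE₂d
  set E₃ := ∫ θ in (0 : ℝ)..2 * π, u₃ θ τ ^ 2 with hE₃d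
  have hE₃ : 0 ≤ E₃ := intervalIntegral.integral_nonneg two_pi_pos.le fun x _ => sq_nonneg _
  have hle : (∫ θ in (0 : ℝ)..2 * π, -2 * u₃ θ τ * (p * u θ τ ^ q * u₃ θ τ
        + p * q * u θ τ ^ (q - 1) * u₁ θ τ * u₂ θ τ
        + p * (q + 1) * u θ τ ^ q * u₁ θ τ - p * u₁ θ τ))
      ≤ ∫ θ in (0 : ℝ)..2 * π, (-(p / 2) * u₃ θ τ ^ 2
        + (64 * p * (2 * π * E₃) + 144 * p) * u₁ θ τ ^ 2) := by
    refine intervalIntegral.integral_mono_on two_pi_pos.le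
      (Continuous.intervalIntegrable (by fun_prop) _ _)
      (Continuous.intervalIntegrable (by fun_prop) _ _) fun θ hθ => ?_
    have hsup : u₂ θ τ ^ 2 ≤ 2 * π * E₃ :=
      sq_le_integral_deriv_sq (h.deriv₂ · τ hτ) (h.deriv₃ · τ hτ) hs3
        (apply_two_pi_eq_apply_zero (h.periodic₁ τ hτ)) hθ
    obtain ⟨h1, h2⟩ := abs_le.1 (hη θ)
    obtain ⟨h3, h4⟩ := abs_le.1 (hη' θ)
    set a := u θ τ ^ q
    set b := u θ τ ^ (q - 1)
    set x := u₁ θ τ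
    set y := u₂ θ τ
    set z := u₃ θ τ
    have e1 : p * (1 / 2) * z ^ 2 ≤ p * a * z ^ 2 := by gcongr; linarith
    have e2 : x ^ 2 * y ^ 2 ≤ x ^ 2 * (2 * π * E₃) := by gcongr
    have e3 : -2 * (p * q * b * x * y * z) ≤ p / 4 * z ^ 2 + 64 * p * (x ^ 2 * y ^ 2) := by
      have hqb0 : 0 ≤ q * b := mul_nonneg (by nlinarith) (by linarith)
      have hqb : q * b ≤ 4 := by
        have : q ≤ 2 := by nlinarith
        nlinarith
      have hqb2 : (q * b) ^ 2 ≤ 16 := by nlinarith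
      have t1 : (q * b) ^ 2 * (x ^ 2 * y ^ 2) ≤ 16 * (x ^ 2 * y ^ 2) := by gcongr
      have t2 := sq_nonneg (z / 2 + 2 * (q * b) * x * y)
      have t3 : -2 * (q * b * x * y * z) ≤ 1 / 4 * z ^ 2 + 64 * (x ^ 2 * y ^ 2) := by nlinarith
      nlinarith [mul_le_mul_of_nonneg_left t3 (by linarith : 0 ≤ p)]
    have e4 : -2 * z * (p * (q + 1) * a * x - p * x) ≤ p / 4 * z ^ 2 + 144 * p * x ^ 2 := by
      set c := (q + 1) * a - 1 with hcd
      have hq1 : 1 ≤ q := by nlinarith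
      have hq2 : q ≤ 2 := by nlinarith
      have hc0 : 0 ≤ c := by nlinarith
      have hc1 : c ≤ 6 := by nlinarith
      have hc2 : c ^ 2 ≤ 36 := by nlinarith
      have t1 : c ^ 2 * x ^ 2 ≤ 36 * x ^ 2 := by gcongr
      have t2 := sq_nonneg (z / 2 + 2 * c * x)
      have t3 : -2 * (c * x * z) ≤ 1 / 4 * z ^ 2 + 144 * x ^ 2 := by nlinarith
      have t4 := mul_le_mul_of_nonneg_left t3 (by linarith : 0 ≤ p)
      rw [hcd] at t4
      linarith
    have e5 := mul_le_mul_of_nonneg_left e2 (by linarith : 0 ≤ 64 * p)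
    linarith
  refine hle.trans ?_
  rw [intervalIntegral.integral_add (Continuous.intervalIntegrable (by fun_prop) _ _)
    (Continuous.intervalIntegrable (by fun_prop) _ _), intervalIntegral.integral_const_mul,
    intervalIntegral.integral_const_mul]
  rw [← hEd, ← hE₃d]
  have k1 := mul_le_mul_of_nonneg_left hsmall (by positivity : 0 ≤ p / 4 * E₃)
  have k2 := mul_le_mul_of_nonneg_left hinterp (by linarith : 0 ≤ p / 4)
  linarith

/-- Exponential decay of the first angular derivative for large times. -/
lemma exists_sq_deriv_le (h : IsNormalizedFlow p q u u₁ u₂ u₃ v₂)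
    (hlim : ∀ r ε : ℝ, 0 < ε → ∀ᶠ τ in atTop, ∀ θ, |u θ τ ^ r - 1| ≤ ε)
    {α : ℝ} (hα0 : 0 < α) (hα : α < 1) :
    ∃ T C, 0 < T ∧ 0 ≤ C ∧ ∀ τ, T ≤ τ → ∀ θ, u₁ θ τ ^ 2 ≤ C * exp (-(4 * α * p) * τ) := by
  have hp := h.one_le
  set β := (1 + α) / 2 with hβ
  have hβ0 : 0 < β := by positivity
  have hβ1 : β < 1 := by linarith
  obtain ⟨T, hT⟩ := eventually_atTop.1 ((((hlim q ((1 - β) / 10) (by linarith)).and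
    (hlim (-q) ((1 - β) / 10) (by linarith))).and
    ((hlim (1 - q) 1 one_pos).and (hlim (q - 1) 1 one_pos))).and (eventually_gt_atTop 0))
  have hT0 : 0 < T := (hT T le_rfl).2
  have hB : ∀ θ τ, T ≤ τ → u θ τ ^ (1 - q) ≤ 2 := fun θ τ hτ => by
    linarith [(abs_le.1 ((hT τ hτ).1.2.1 θ)).2]
  set E : ℝ → ℝ := fun τ => ∫ θ in (0 : ℝ)..2 * π, u₁ θ τ ^ 2 with hE
  set E₂ : ℝ → ℝ := fun τ => ∫ θ in (0 : ℝ)..2 * π, u₂ θ τ ^ 2 with hE₂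
  have hEnn : ∀ τ, 0 ≤ E τ := fun τ =>
    intervalIntegral.integral_nonneg two_pi_pos.le fun x _ => sq_nonneg _
  have hE₂nn : ∀ τ, 0 ≤ E₂ τ := fun τ =>
    intervalIntegral.integral_nonneg two_pi_pos.le fun x _ => sq_nonneg _
  have hEle := fun τ (hτ : T ≤ τ) => h.energy_deriv_le hβ0 hβ1 (hT0.trans_le hτ) (hT τ hτ).1.1.1
    (h.spectral_gap hT0 hB (hT0.trans_le hτ) (hT τ hτ).1.1.2)
  have hEdecay : ∀ τ, T ≤ τ → E τ ≤ E T * exp (4 * β * p * T) * exp (-(4 * β * p) * τ) :=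
    fun τ hτ => le_mul_exp_of_deriv_le (fun t ht => h.energy_evolution (hT0.trans_le ht)) hEle hτ
  have hsmall : ∀ᶠ τ in atTop, 512 * π * E τ ≤ 1 := by
    have hexp : Tendsto (fun τ => 512 * π * (E T * exp (4 * β * p * T) * exp (-(4 * β * p) * τ)))
        atTop (nhds (512 * π * (E T * exp (4 * β * p * T) * 0))) := by
      refine ((tendsto_exp_atBot.comp ?_).const_mul _).const_mul _
      exact tendsto_id.const_mul_atTop_of_neg (by nlinarith : -(4 * β * p) < 0)
    filter_upwards [hexp.eventually_le_const (u := 1) (by simp), eventually_ge_atTop T]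
      with τ h1 h2
    refine le_trans ?_ h1
    have := hEdecay τ h2
    gcongr
  obtain ⟨T₁, hT₁⟩ := eventually_atTop.1 (hsmall.and (eventually_ge_atTop T))
  have hTT₁ : T ≤ T₁ := (hT₁ T₁ le_rfl).2
  set N := 80 / (1 - α) with hN
  have hα' : 0 < 1 - α := by linarith
  have hNpos : 0 < N := by positivity
  have hNα : N * (1 - α) = 80 := by rw [hN]; field_simp
  have hY := fun τ (hτ : T₁ ≤ τ) => le_mul_exp_of_deriv_le (f := fun τ => E₂ τ + N * E τ)
    (c := 4 * α * p) (T := T₁)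
    (fun t ht => (h.energy₂_evolution (hT0.trans_le (hTT₁.trans ht))).add
      ((h.energy_evolution (hT0.trans_le (hTT₁.trans ht))).const_mul N)) (fun t ht => by
      have k1 := mul_le_mul_of_nonneg_left (hEle t (hTT₁.trans ht)) hNpos.le
      have k2 := h.energy₂_deriv_le (hT0.trans_le (hTT₁.trans ht))
        (fun θ => ((hT t (hTT₁.trans ht)).1.1.1 θ).trans (by linarith))
        (hT t (hTT₁.trans ht)).1.2.2 (hT₁ t ht).1
      refine (add_le_add k2 k1).trans ?_
      change -(4 * p) * E₂ t + 160 * p * E t + N * (-(4 * β * p) * E t)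
        ≤ -(4 * α * p) * (E₂ t + N * E t)
      have k3 : 4 * N * (β - α) * p * E t = 160 * p * E t := by
        rw [show β - α = (1 - α) / 2 by rw [hβ]; ring]
        linear_combination (2 * p * E t) * hNα
      have k4 : 0 ≤ (1 - α) * (4 * p * E₂ t) :=
        mul_nonneg hα'.le (mul_nonneg (by linarith) (hE₂nn t))
      linarith) hτ
  refine ⟨T₁, 2 * π * ((E₂ T₁ + N * E T₁) * exp (4 * α * p * T₁)), hT0.trans_le hTT₁, ?_, ?_⟩
  · have := hEnn T₁
    have := hE₂nn T₁
    positivity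
  · intro τ hτ θ
    have hτ0 := hT0.trans_le (hTT₁.trans hτ)
    obtain ⟨y, hy, hyθ⟩ := (h.periodic₁ τ hτ0).exists_mem_Ico₀ two_pi_pos θ
    have hsup := sq_le_integral_deriv_sq (h.deriv₁ · τ hτ0) (h.deriv₂ · τ hτ0)
      (continuous_slice h.cont₂ hτ0) (apply_two_pi_eq_apply_zero (h.periodic τ)) (Ico_subset_Icc_self hy)
    have hNE : 0 ≤ N * E τ := mul_nonneg hNpos.le (hEnn τ)
    have hY' := hY τ hτ
    calc u₁ θ τ ^ 2 = u₁ y τ ^ 2 := by rw [show u₁ θ τ = u₁ y τ from hyθ]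
      _ ≤ 2 * π * E₂ τ := hsup
      _ ≤ 2 * π * ((E₂ T₁ + N * E T₁) * exp (4 * α * p * T₁) * exp (-(4 * α * p) * τ)) := by
        gcongr
        linarith
      _ = _ := by ring

end IsNormalizedFlow

/-- Powers converge uniformly along a uniform convergence to `1`. -/
lemma eventually_abs_rpow_sub_one_le {K : ℝ → ℝ → ℝ}
    (hconv : TendstoUniformly (fun τ θ => K θ τ) (fun _ => 1) atTop) (r ε : ℝ) (hε : 0 < ε) :
    ∀ᶠ τ in atTop, ∀ θ, |K θ τ ^ r - 1| ≤ ε := by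
  have hcont : ContinuousAt (fun x : ℝ => x ^ r) 1 :=
    continuousAt_rpow_const _ _ (Or.inl one_ne_zero)
  obtain ⟨δ, hδ, h⟩ := Metric.continuousAt_iff.1 hcont ε hε
  filter_upwards [Metric.tendstoUniformly_iff.1 hconv δ hδ] with τ hτ θ
  have := h (x := K θ τ) (by rw [dist_comm]; exact hτ θ)
  rw [one_rpow, Real.dist_eq] at this
  exact this.le

/-- The angular derivative is bounded on compact time intervals, up to the initial time. -/
lemma exists_bound_deriv_fst {K : ℝ → ℝ → ℝ}
    (hsmooth : ContDiffOn ℝ (⊤ : ℕ∞) (fun q : ℝ × ℝ => K q.1 q.2) (univ ×ˢ Ici 0))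
    (hper : ∀ τ : ℝ, Function.Periodic (fun θ => K θ τ) (2 * π)) (T : ℝ) :
    ∃ B, ∀ τ, 0 ≤ τ → τ ≤ T → ∀ θ, |deriv (fun x => K x τ) θ| ≤ B := by
  set S : Set (ℝ × ℝ) := univ ×ˢ Ici 0
  set F : ℝ × ℝ → ℝ := fun q => K q.1 q.2
  have hcont : ContinuousOn (fun q => fderivWithin ℝ F S q (1, 0)) S :=
    (hsmooth.continuousOn_fderivWithin (uniqueDiffOn_univ.prod (uniqueDiffOn_Ici 0))
      (by simp)).clm_apply continuousOn_const
  have hd : ∀ θ τ, 0 ≤ τ →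
      HasDerivAt (fun x => K x τ) (fderivWithin ℝ F S (θ, τ) (1, 0)) θ := by
    intro θ τ hτ
    have hF : HasFDerivWithinAt F (fderivWithin ℝ F S (θ, τ)) S (θ, τ) :=
      (hsmooth.differentiableOn (by simp) (θ, τ) ⟨mem_univ _, hτ⟩).hasFDerivWithinAt
    have hl : HasDerivWithinAt (fun x : ℝ => (x, τ)) ((1 : ℝ), (0 : ℝ)) univ θ :=
      ((hasDerivAt_id θ).prodMk (hasDerivAt_const θ τ)).hasDerivWithinAt
    have := hF.comp_hasDerivWithinAt θ hl
      (fun x _ => show (x, τ) ∈ S from ⟨mem_univ _, hτ⟩)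
    exact hasDerivWithinAt_univ.1 this
  obtain ⟨B, hB⟩ := (isCompact_Icc.prod isCompact_Icc).exists_bound_of_continuousOn
    (s := Icc (0 : ℝ) (2 * π) ×ˢ Icc 0 T) (hcont.mono fun q hq => ⟨mem_univ _, hq.2.1⟩)
  refine ⟨B, fun τ h0 hT θ => ?_⟩
  have hper' := HasDerivAt.periodic (hd · τ h0) (hper τ)
  obtain ⟨y, hy, hyθ⟩ := hper'.exists_mem_Ico₀ two_pi_pos θ
  rw [(hd θ τ h0).deriv]
  have := hB (y, τ) ⟨Ico_subset_Icc_self hy, h0, hT⟩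
  rwa [← show _ = _ from hyθ] at this

/-- Corollary 3.7: exponential decay of the uniform norm of the first
angular derivative of the normalized curvature. -/
theorem first_derivative_sup_decay
    (p : ℝ) (hp : 1 ≤ p) (K : ℝ → ℝ → ℝ)
    (hsmooth : ContDiffOn ℝ (⊤ : ℕ∞) (fun q : ℝ × ℝ => K q.1 q.2) (univ ×ˢ Ici 0))
    (hper : ∀ τ : ℝ, Function.Periodic (fun θ => K θ τ) (2 * π))
    (hpos : ∀ θ τ : ℝ, 0 ≤ τ → 0 < K θ τ)
    (hpde : ∀ θ : ℝ, ∀ τ ∈ Ioi (0:ℝ),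
      deriv (fun s => K θ s) τ =
        p * K θ τ ^ (1 + 1 / p) * deriv (deriv (fun x => K x τ)) θ
          + p * K θ τ ^ (2 + 1 / p) - p * K θ τ)
    (hconv : TendstoUniformly (fun τ θ => K θ τ) (fun _ => 1) atTop) :
    ∀ α : ℝ, 0 < α → α < 1 → ∃ C : ℝ, 0 < C ∧ ∀ τ : ℝ, 0 ≤ τ → ∀ θ : ℝ,
      |deriv (fun x => K x τ) θ| ≤ C * Real.exp (-2 * α * p * τ) := by
  intro α hα0 hα
  obtain ⟨u₁, u₂, u₃, v₂, h⟩ := exists_isNormalizedFlow hp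
    (hsmooth.mono (prod_mono_right Ioi_subset_Ici_self)) hper (fun θ τ hτ => hpos θ τ hτ.le) hpde
  obtain ⟨T, D, hT, hD, hdecay⟩ :=
    h.exists_sq_deriv_le (eventually_abs_rpow_sub_one_le hconv) hα0 hα
  obtain ⟨B, hB⟩ := exists_bound_deriv_fst hsmooth hper T
  have hB0 : 0 ≤ B := (abs_nonneg _).trans (hB 0 le_rfl hT.le 0)
  refine ⟨√D + B * exp (2 * α * p * T) + 1, by positivity, fun τ hτ θ => ?_⟩
  have hexp := exp_pos (-2 * α * p * τ)
  rcases le_total τ T with hle | hge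
  · have h1 : B ≤ B * exp (2 * α * p * T) * exp (-2 * α * p * τ) := by
      rw [mul_assoc, ← exp_add]
      refine le_mul_of_one_le_right hB0 (one_le_exp ?_)
      have : 0 ≤ 2 * α * p * (T - τ) := mul_nonneg (by positivity) (by linarith)
      linarith
    have h2 : 0 ≤ (√D + 1) * exp (-2 * α * p * τ) := by positivity
    linarith [hB τ hτ hle θ]
  · rw [(h.deriv₁ θ τ (hT.trans_le hge)).deriv]
    have h1 : |u₁ θ τ| ≤ √D * exp (-2 * α * p * τ) := by
      refine abs_le_of_sq_le_sq ?_ (by positivity)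
      rw [mul_pow, sq_sqrt hD, ← exp_nat_mul,
        show ((2 : ℕ) : ℝ) * (-2 * α * p * τ) = -(4 * α * p) * τ by push_cast; ring]
      exact hdecay τ hge θ
    have h2 : 0 ≤ (B * exp (2 * α * p * T) + 1) * exp (-2 * α * p * τ) := by positivity
    linarith
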